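/- arXiv:1107.1700 — 2 statements merged into one kernel-verified Lean document; each statement's English description precedes it below -/
import Mathlib

section
/- Let m be a prime; for each prime q ≤ m fix k_q ∈ {1,…,q−1}, an integer j_q ≥ 0, a_q ∈ I_q, and γ_q ∈ ℂ. Define Ψ ∈ L²(Ã, μ̃) by Ψ(x) = ∏_{q≤m} ψ^{(0)}_{k_q; j_q a_q}(x_q) · ∏_{q>m} 1_{ℤ_q}(x_q), and let D^γΨ := 𝓕̃^{−1}[𝒜 · 𝓕̃Ψ], where 𝒜(ξ) = ∏_{q≤m} |ξ_q|_q^{γ_q} · ∏_{q>m} 1_{ℤ_q}(ξ_q) (with t^γ := exp(γ log t) for t > 0). Then D^γΨ = (∏_{q≤m} q^{γ_q(j_q+1)}) · Ψ. In particular, if γ_q = γ for all q ≤ m, then D^γΨ = (∏_{q≤m} q^{j_q+1})^γ · Ψ. -/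
open MeasureTheory Complex
open scoped Classical

noncomputable section

variable (p : ℕ) [Fact p.Prime]

instance : MeasurableSpace ℚ_[p] := borel _
instance : BorelSpace ℚ_[p] := ⟨rfl⟩

instance (q : Nat.Primes) : Fact (q : ℕ).Prime := ⟨q.2⟩

/-- The indicator function of `ℤ_p` inside `ℚ_p`. -/
def indZ (x : ℚ_[p]) : ℂ := if ‖x‖ ≤ 1 then 1 else 0

/-- The fractional part of a `p`-adic number: the unique rational `r ∈ ℤ[1/p] ∩ [0,1)`
with `x - r ∈ ℤ_p`. -/
def padicFract (x : ℚ_[p]) : ℚ :=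
  if h : ∃ r : ℚ, (0 ≤ r ∧ r < 1 ∧ ∃ (m : ℤ) (n : ℕ), r = m / p ^ n) ∧ ‖x - (r : ℚ_[p])‖ ≤ 1
  then h.choose else 0

/-- The standard additive character `χ_p` of `ℚ_p`. -/
def padicChar (x : ℚ_[p]) : ℂ := Complex.exp (2 * Real.pi * Complex.I * (padicFract p x : ℂ))

/-- The Kozyrev wavelet `ψ⁰_{k;ja}`. -/
def kozyrev (k : ℕ) (j : ℤ) (a : ℚ_[p]) (x : ℚ_[p]) : ℂ :=
  ((p : ℝ) ^ ((j : ℝ) / 2) : ℝ) *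
    padicChar p ((k : ℚ_[p]) / (p : ℚ_[p]) * ((p : ℚ_[p]) ^ (-j) * x - a)) *
    indZ p ((p : ℚ_[p]) ^ (-j) * x - a)

/-- The set `I_p = ℤ[1/p] ∩ [0,1)` of shifts, viewed inside `ℚ_p`. -/
def Ip : Set ℚ_[p] := {a | ∃ (m n : ℕ), m < p ^ n ∧ a = (m : ℚ_[p]) / (p : ℚ_[p]) ^ n}

/-- The finite adele ring of `ℚ`: the restricted product of the fields `ℚ_p` with respect
to the subrings `ℤ_p`. -/
def FiniteAdele : Type :=
  {x : ∀ q : Nat.Primes, ℚ_[(q : ℕ)] // ∀ᶠ q : Nat.Primes in Filter.cofinite, ‖x q‖ ≤ 1}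

instance : MeasurableSpace FiniteAdele := by unfold FiniteAdele; infer_instance

/-- The standard additive character `χ̃` of `Ã`, evaluated at `ξ·x`:
`χ̃(ξ·x) = ∏_q χ_q(ξ_q x_q)`. -/
def chiTilde (ξ x : FiniteAdele) : ℂ :=
  ∏' q : Nat.Primes, padicChar q (ξ.1 q * x.1 q)

/-- The Fourier transform on `Ã`: `𝓕̃f(ξ) = ∫ χ̃(ξ·x) f(x) dμ̃(x)` (as an integral; on
`L¹ ∩ L²` it agrees with the unitary `L²` Fourier transform). -/
def Ftilde (μ : MeasureTheory.Measure FiniteAdele) (f : FiniteAdele → ℂ)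
    (ξ : FiniteAdele) : ℂ :=
  ∫ x, chiTilde ξ x * f x ∂μ

/-- The inverse Fourier transform on `Ã`: `𝓕̃⁻¹f(x) = ∫ χ̃(-ξ·x) f(ξ) dμ̃(ξ)`. -/
def FtildeInv (μ : MeasureTheory.Measure FiniteAdele) (f : FiniteAdele → ℂ)
    (x : FiniteAdele) : ℂ :=
  ∫ ξ, (∏' q : Nat.Primes, padicChar q (-(ξ.1 q * x.1 q))) * f ξ ∂μ

/-- The adelic wavelet `Ψ(x) = ∏_{q ≤ m} ψ⁰_{k_q;j_q a_q}(x_q) ∏_{q > m} 1_{ℤ_q}(x_q)`. -/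
def PsiWav (m : Nat.Primes) (k : Nat.Primes → ℕ) (j : Nat.Primes → ℤ)
    (a : ∀ q : Nat.Primes, ℚ_[(q : ℕ)]) (x : FiniteAdele) : ℂ :=
  ∏' q : Nat.Primes,
    (if (q : ℕ) ≤ (m : ℕ) then kozyrev q (k q) (j q) (a q) (x.1 q)
     else indZ q (x.1 q))


/-- The symbol of the fractional operator `D^γ`:
`𝒜(ξ) = ∏_{q ≤ m} |ξ_q|_q^{γ_q} ∏_{q > m} 1_{ℤ_q}(ξ_q)`. -/
def symbGamma (m : Nat.Primes) (γ : Nat.Primes → ℂ) (ξ : FiniteAdele) : ℂ :=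
  ∏' q : Nat.Primes,
    (if (q : ℕ) ≤ (m : ℕ) then ((‖ξ.1 q‖ : ℝ) : ℂ) ^ (γ q) else indZ q (ξ.1 q))

/-! ### Helper lemmas -/

theorem wv_fract_exists (x : ℚ_[p]) :
    ∃ r : ℚ, (0 ≤ r ∧ r < 1 ∧ ∃ (m : ℤ) (n : ℕ), r = m / p ^ n) ∧ ‖x - (r : ℚ_[p])‖ ≤ 1 := by
  have hp : (p : ℚ_[p]) ≠ 0 := by exact_mod_cast (Fact.out : p.Prime).ne_zero
  have hpos : (0 : ℚ) < p := by exact_mod_cast (Fact.out : p.Prime).pos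
  have hp1 : (1 : ℝ) < p := by exact_mod_cast (Fact.out : p.Prime).one_lt
  obtain ⟨n, hn⟩ := pow_unbounded_of_one_lt ‖x‖ hp1
  have hz : ‖x * (p : ℚ_[p]) ^ n‖ ≤ 1 := by
    rw [norm_mul, norm_pow, Padic.norm_p, inv_pow, ← div_eq_mul_inv, div_le_one (by positivity)]
    exact hn.le
  let z : ℤ_[p] := ⟨x * (p : ℚ_[p]) ^ n, hz⟩
  have hs := PadicInt.appr_spec n z
  rw [← PadicInt.norm_le_pow_iff_mem_span_pow] at hs
  have hlt := PadicInt.appr_lt z n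
  refine ⟨(z.appr n : ℚ) / p ^ n, ⟨by positivity, ?_, (z.appr n : ℤ), n, by push_cast; rfl⟩, ?_⟩
  · rw [div_lt_one (by positivity)]
    exact_mod_cast hlt
  · have e : x - (((z.appr n : ℚ) / p ^ n : ℚ) : ℚ_[p])
        = ((z - (z.appr n : ℤ_[p]) : ℤ_[p]) : ℚ_[p]) * ((p : ℚ_[p]) ^ n)⁻¹ := by
      have : (z : ℚ_[p]) = x * (p : ℚ_[p]) ^ n := rfl
      push_cast
      rw [this]
      field_simp
    rw [e, norm_mul, norm_inv, norm_pow, Padic.norm_p]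
    rw [PadicInt.norm_def] at hs
    rw [zpow_neg, zpow_natCast] at hs
    rw [inv_pow, inv_inv]
    calc _ ≤ ((p : ℝ) ^ n)⁻¹ * (p : ℝ) ^ n := by gcongr
      _ = 1 := inv_mul_cancel₀ (by positivity)

theorem wv_fract_spec (x : ℚ_[p]) :
    (0 ≤ padicFract p x ∧ padicFract p x < 1 ∧
      ∃ (m : ℤ) (n : ℕ), padicFract p x = m / p ^ n) ∧
      ‖x - (padicFract p x : ℚ_[p])‖ ≤ 1 := by
  have h := wv_fract_exists p x
  unfold padicFract
  rw [dif_pos h]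
  exact h.choose_spec

theorem wv_int (r : ℚ) (h : ∃ (m : ℤ) (n : ℕ), r = m / p ^ n) (hr : ‖(r : ℚ_[p])‖ ≤ 1) :
    ∃ z : ℤ, r = z := by
  obtain ⟨m, n, rfl⟩ := h
  have hp : (p : ℚ) ≠ 0 := by exact_mod_cast (Fact.out : p.Prime).ne_zero
  have hp0 : (0 : ℝ) < p := by exact_mod_cast (Fact.out : p.Prime).pos
  have : ‖(m : ℚ_[p])‖ ≤ (p : ℝ) ^ (-(n : ℤ)) := by
    push_cast at hr
    rw [norm_div, norm_pow, Padic.norm_p, inv_pow, div_inv_eq_mul] at hr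
    rw [zpow_neg, zpow_natCast]
    rwa [← le_div_iff₀ (by positivity), one_div] at hr
  rw [Padic.norm_int_le_pow_iff_dvd] at this
  obtain ⟨z, rfl⟩ := this
  refine ⟨z, ?_⟩
  push_cast
  field_simp

theorem wv_char_eq (x : ℚ_[p]) (r : ℚ) (h : ∃ (m : ℤ) (n : ℕ), r = m / p ^ n)
    (hr : ‖x - (r : ℚ_[p])‖ ≤ 1) :
    padicChar p x = Complex.exp (2 * Real.pi * Complex.I * (r : ℂ)) := by
  have hp : (p : ℚ) ≠ 0 := by exact_mod_cast (Fact.out : p.Prime).ne_zero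
  obtain ⟨⟨-, -, m', n', h'⟩, hr'⟩ := wv_fract_spec p x
  obtain ⟨m, n, h⟩ := h
  obtain ⟨z, hz⟩ := wv_int p (padicFract p x - r)
    ⟨m' * p ^ n - m * p ^ n', n' + n, by rw [h, h']; push_cast; field_simp; ring⟩ (by
      have : ((padicFract p x - r : ℚ) : ℚ_[p]) = (x - r) - (x - padicFract p x) := by
        push_cast; ring
      rw [this, sub_eq_add_neg]
      refine (Padic.nonarchimedean _ _).trans (max_le hr ?_)
      rwa [norm_neg])
  have : padicFract p x = r + z := by rw [← hz]; ring
  unfold padicChar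
  rw [this]
  push_cast
  rw [mul_add, Complex.exp_add]
  have : 2 * (Real.pi : ℂ) * Complex.I * (z : ℂ) = z * (2 * Real.pi * Complex.I) := by ring
  rw [this, Complex.exp_int_mul_two_pi_mul_I, mul_one]

theorem wv_char_add (x y : ℚ_[p]) : padicChar p (x + y) = padicChar p x * padicChar p y := by
  have hp : (p : ℚ) ≠ 0 := by exact_mod_cast (Fact.out : p.Prime).ne_zero
  obtain ⟨⟨-, -, m', n', h'⟩, hr'⟩ := wv_fract_spec p x
  obtain ⟨⟨-, -, m, n, h⟩, hr⟩ := wv_fract_spec p y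
  rw [wv_char_eq p (x + y) (padicFract p x + padicFract p y)
    ⟨m' * p ^ n + m * p ^ n', n' + n, by rw [h, h']; push_cast; field_simp; ring⟩ (by
      have : x + y - ((padicFract p x + padicFract p y : ℚ) : ℚ_[p])
          = (x - padicFract p x) + (y - padicFract p y) := by
        push_cast; ring
      rw [this]
      exact (Padic.nonarchimedean _ _).trans (max_le hr' hr))]
  unfold padicChar
  rw [← Complex.exp_add]
  push_cast
  ring_nf

theorem wv_char_one (x : ℚ_[p]) (hx : ‖x‖ ≤ 1) : padicChar p x = 1 := by
  rw [wv_char_eq p x 0 ⟨0, 0, by simp⟩ (by simpa using hx)]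
  simp

theorem wv_char_meas : Measurable (padicChar p) := by
  apply Continuous.measurable
  apply IsLocallyConstant.continuous
  rw [IsLocallyConstant.iff_eventually_eq]
  intro x
  filter_upwards [Metric.ball_mem_nhds x one_pos] with y hy
  have : y = x + (y - x) := by ring
  rw [this, wv_char_add, wv_char_one p (y - x), mul_one]
  rw [Metric.mem_ball, dist_eq_norm] at hy
  exact hy.le

theorem wv_indZ_meas : Measurable (indZ p) := by
  unfold indZ
  exact Measurable.ite (measurableSet_le measurable_norm measurable_const)
    measurable_const measurable_const

theorem wv_char_ne (z : ℚ_[p]) (hz : ¬ ‖z‖ ≤ 1) : ∃ t : ℚ_[p], ‖t‖ ≤ 1 ∧ padicChar p (t * z) ≠ 1 := by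
  have hp : (p : ℚ_[p]) ≠ 0 := by exact_mod_cast (Fact.out : p.Prime).ne_zero
  have hp1 : (1 : ℝ) < p := by exact_mod_cast (Fact.out : p.Prime).one_lt
  have hz0 : z ≠ 0 := by rintro rfl; simp at hz
  refine ⟨(p : ℚ_[p])⁻¹ * z⁻¹, ?_, ?_⟩
  · rw [norm_mul, norm_inv, norm_inv, Padic.norm_p, inv_inv, ← div_eq_mul_inv,
      div_le_one (by linarith)]
    have e := Padic.norm_eq_zpow_neg_valuation hz0
    rw [e] at hz ⊢
    have : (0 : ℤ) < -z.valuation := by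
      by_contra hc
      exact hz (zpow_le_one_of_nonpos₀ hp1.le (not_lt.mp hc))
    calc (p : ℝ) = (p : ℝ) ^ (1 : ℤ) := by simp
      _ ≤ _ := zpow_le_zpow_right₀ hp1.le (by omega)
  · rw [mul_assoc, inv_mul_cancel₀ hz0, mul_one,
      wv_char_eq p _ (1 / p) ⟨1, 1, by simp⟩ (by push_cast; simp)]
    intro h
    rw [Complex.exp_eq_one_iff] at h
    obtain ⟨n, hn⟩ := h
    have hpi : (2 * Real.pi * Complex.I : ℂ) ≠ 0 := Complex.two_pi_I_ne_zero
    have : (((1 / p : ℚ) : ℂ)) = n := by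
      apply mul_left_cancel₀ hpi
      rw [hn]; ring
    have h2 : (1 / p : ℚ) = n := by exact_mod_cast this
    have hpq : (1 : ℚ) < p := by exact_mod_cast (Fact.out : p.Prime).one_lt
    have h3 : (0 : ℚ) < 1 / p := by positivity
    have h4 : (1 / p : ℚ) < 1 := by rw [div_lt_one (by linarith)]; exact hpq
    rw [h2] at h3 h4
    have h5 : 0 < n := by exact_mod_cast h3
    have h6 : n < 1 := by exact_mod_cast h4
    omega

theorem wv_indZ_add (y t : ℚ_[p]) (ht : ‖t‖ ≤ 1) : indZ p (t + y) = indZ p y := by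
  unfold indZ
  have : ‖t + y‖ ≤ 1 ↔ ‖y‖ ≤ 1 := by
    constructor
    · intro h
      have e : y = (t + y) + (-t) := by ring
      rw [e]
      exact (Padic.nonarchimedean _ _).trans (max_le h (by rwa [norm_neg]))
    · intro h
      exact (Padic.nonarchimedean _ _).trans (max_le ht h)
  simp only [this]

theorem wv_indZ_neg (y : ℚ_[p]) : indZ p (-y) = indZ p y := by
  unfold indZ
  rw [norm_neg]

theorem wv_int_ind (ν : Measure ℚ_[p]) (hν : ν {x : ℚ_[p] | ‖x‖ ≤ 1} = 1) : ∫ y, indZ p y ∂ν = 1 := by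
  have : indZ p = Set.indicator {x : ℚ_[p] | ‖x‖ ≤ 1} (fun _ => (1 : ℂ)) := by
    ext x
    simp [indZ, Set.indicator]
  rw [this, integral_indicator (measurableSet_le measurable_norm measurable_const)]
  simp [Measure.real, hν]

theorem wv_int_char (ν : Measure ℚ_[p]) [ν.IsAddHaarMeasure] (hν : ν {x : ℚ_[p] | ‖x‖ ≤ 1} = 1)
    (z : ℚ_[p]) : ∫ y, padicChar p (y * z) * indZ p y ∂ν = indZ p z := by
  by_cases hz : ‖z‖ ≤ 1
  · have : ∀ y, padicChar p (y * z) * indZ p y = indZ p y := by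
      intro y
      unfold indZ
      split_ifs with h
      · rw [wv_char_one, mul_one]
        rw [norm_mul]
        exact mul_le_one₀ h (norm_nonneg _) hz
      · simp
    simp_rw [this]
    rw [wv_int_ind p ν hν]
    simp [indZ, hz]
  · obtain ⟨t, ht, hne⟩ := wv_char_ne p z hz
    have h := integral_add_left_eq_self (μ := ν) (fun y => padicChar p (y * z) * indZ p y) t
    simp_rw [add_mul, wv_char_add, wv_indZ_add p _ t ht, mul_assoc] at h
    rw [integral_const_mul] at h
    have h2 : (padicChar p (t * z) - 1) * ∫ y, padicChar p (y * z) * indZ p y ∂ν = 0 := by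
      rw [sub_mul, h]; ring
    rcases mul_eq_zero.mp h2 with h3 | h3
    · exact absurd (sub_eq_zero.mp h3) hne
    · rw [h3]; simp [indZ, hz]

theorem wv_scale1 (ν : Measure ℚ_[p]) [ν.IsAddHaarMeasure] (c : ℚ_[p]) (hc : c ≠ 0) :
    ∃ C : ℂ, ∀ f : ℚ_[p] → ℂ, ∫ x, f (c * x) ∂ν = C * ∫ x, f x ∂ν := by
  let e : ℚ_[p] ≃+ ℚ_[p] := 
    { toFun := fun x => c * x
      invFun := fun x => c⁻¹ * x
      left_inv := fun x => inv_mul_cancel_left₀ hc x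
      right_inv := fun x => mul_inv_cancel_left₀ hc x
      map_add' := fun x y => mul_add c x y }
  have he : Continuous e := continuous_const_mul c
  have hes : Continuous e.symm := continuous_const_mul c⁻¹
  have := e.isAddHaarMeasure_map ν he hes
  have h := Measure.isAddLeftInvariant_eq_smul (ν.map e) ν
  refine ⟨(Measure.addHaarScalarFactor (ν.map e) ν : ℝ), fun f => ?_⟩
  have h1 := (Homeomorph.mulLeft₀ c hc).measurableEmbedding.integral_map (μ := ν) f
  have h2 : (Homeomorph.mulLeft₀ c hc : ℚ_[p] → ℚ_[p]) = e := rfl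
  rw [h2, h, integral_smul_nnreal_measure] at h1
  rw [← Complex.real_smul]
  exact h1.symm

theorem wv_scale (ν : Measure ℚ_[p]) [ν.IsAddHaarMeasure] (hν : ν {x : ℚ_[p] | ‖x‖ ≤ 1} = 1)
    (c : ℚ_[p]) (hc : c ≠ 0) :
    ∃ C D : ℂ, D * C = 1 ∧ (∀ f : ℚ_[p] → ℂ, ∫ x, f (c * x) ∂ν = C * ∫ x, f x ∂ν) ∧
      (∀ f : ℚ_[p] → ℂ, ∫ x, f (c⁻¹ * x) ∂ν = D * ∫ x, f x ∂ν) := by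
  obtain ⟨C, hC⟩ := wv_scale1 p ν c hc
  obtain ⟨D, hD⟩ := wv_scale1 p ν c⁻¹ (inv_ne_zero hc)
  refine ⟨C, D, ?_, hC, hD⟩
  have h1 := hD (fun x => indZ p (c * x))
  rw [hC (indZ p)] at h1
  simp_rw [mul_inv_cancel_left₀ hc] at h1
  rw [wv_int_ind p ν hν] at h1
  rw [h1]; ring

theorem wv_cpow (n : ℤ) (γ : ℂ) :
    (((p : ℝ) ^ n : ℝ) : ℂ) ^ γ = (p : ℂ) ^ (γ * (n : ℂ)) := by
  have hp : (p : ℂ) ≠ 0 := by exact_mod_cast (Fact.out : p.Prime).ne_zero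
  have hp0 : (0 : ℝ) < p := by exact_mod_cast (Fact.out : p.Prime).pos
  have h0 : (0 : ℝ) < (p : ℝ) ^ n := by positivity
  rw [Complex.cpow_def_of_ne_zero (by exact_mod_cast h0.ne'), Complex.cpow_def_of_ne_zero hp,
    ← Complex.ofReal_log h0.le, Real.log_zpow]
  push_cast
  ring_nf

/-- The local Fourier transform. -/
def wvHat (ν : Measure ℚ_[p]) (f : ℚ_[p] → ℂ) (ξ : ℚ_[p]) : ℂ := ∫ y, padicChar p (ξ * y) * f y ∂ν

theorem wv_hat_ind (ν : Measure ℚ_[p]) [ν.IsAddHaarMeasure] (hν : ν {x : ℚ_[p] | ‖x‖ ≤ 1} = 1)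
    : wvHat p ν (indZ p) = indZ p := by
  ext ξ
  unfold wvHat
  rw [← wv_int_char p ν hν ξ]
  simp_rw [mul_comm ξ]

theorem wv_inv_ind (ν : Measure ℚ_[p]) [ν.IsAddHaarMeasure] (hν : ν {x : ℚ_[p] | ‖x‖ ≤ 1} = 1)
    (x : ℚ_[p]) :
    ∫ ξ, padicChar p (-(ξ * x)) * wvHat p ν (indZ p) ξ ∂ν = indZ p x := by
  rw [wv_hat_ind p ν hν, ← wv_indZ_neg, ← wv_int_char p ν hν (-x)]
  simp_rw [mul_neg]

theorem wv_hat_koz (ν : Measure ℚ_[p]) [ν.IsAddHaarMeasure] (hν : ν {x : ℚ_[p] | ‖x‖ ≤ 1} = 1)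
    (k : ℕ) (j : ℤ) (a : ℚ_[p]) (hk : 1 ≤ k ∧ k ≤ p - 1) :
    Measurable (wvHat p ν (kozyrev p k j a)) ∧
    (∀ γ ξ, ((‖ξ‖ : ℝ) : ℂ) ^ γ * wvHat p ν (kozyrev p k j a) ξ
      = (p : ℂ) ^ (γ * ((j : ℂ) + 1)) * wvHat p ν (kozyrev p k j a) ξ) ∧
    (∀ x, ∫ ξ, padicChar p (-(ξ * x)) * wvHat p ν (kozyrev p k j a) ξ ∂ν
      = kozyrev p k j a x) := by
  have hp : (p : ℚ_[p]) ≠ 0 := by exact_mod_cast (Fact.out : p.Prime).ne_zero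
  have hp1 : (1 : ℝ) < p := by exact_mod_cast (Fact.out : p.Prime).one_lt
  have hcn : ‖(p : ℚ_[p]) ^ (-j)‖ = (p : ℝ) ^ j := by
    rw [norm_zpow, Padic.norm_p, inv_zpow, zpow_neg, inv_inv]
  have hkn : ‖(k : ℚ_[p]) / p‖ = p := by
    have : ‖(k : ℚ_[p])‖ = 1 := by
      rw [Padic.norm_natCast_eq_one_iff]
      have := (Fact.out : p.Prime).pos
      exact ((Nat.Prime.coprime_iff_not_dvd Fact.out).2
        (Nat.not_dvd_of_pos_of_lt (by omega) (by omega)))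
    rw [norm_div, this, Padic.norm_p]; simp
  have hc : (p : ℚ_[p]) ^ (-j) ≠ 0 := zpow_ne_zero _ hp
  unfold kozyrev
  set c := (p : ℚ_[p]) ^ (-j)
  set P : ℂ := (((p : ℝ) ^ ((j : ℝ) / 2) : ℝ) : ℂ)
  set κ := (k : ℚ_[p]) / p
  obtain ⟨C, D, hDC, hC, hD⟩ := wv_scale p ν hν c hc
  have hat : wvHat p ν (fun x => P * padicChar p (κ * (c * x - a)) * indZ p (c * x - a))
      = fun ξ => C * P * padicChar p (ξ * c⁻¹ * a) * indZ p (c⁻¹ * ξ + κ) := by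
    ext ξ
    unfold wvHat
    have e1 : ∀ y, padicChar p (ξ * y) * (P * padicChar p (κ * (c * y - a)) * indZ p (c * y - a))
        = (fun w => (fun z => P * padicChar p (ξ * c⁻¹ * a) *
          (padicChar p (z * (c⁻¹ * ξ + κ)) * indZ p z)) (w - a)) (c * y) := by
      intro y
      have : ξ * y = ξ * c⁻¹ * a + (c * y - a) * (c⁻¹ * ξ) := by field_simp; ring
      simp only
      rw [this, wv_char_add, mul_add, wv_char_add, mul_comm κ]
      ring
    rw [integral_congr_ae (Filter.Eventually.of_forall e1),
      hC (fun w => (fun z => P * padicChar p (ξ * c⁻¹ * a) *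
          (padicChar p (z * (c⁻¹ * ξ + κ)) * indZ p z)) (w - a)), integral_sub_right_eq_self (μ := ν) (fun z => P * padicChar p (ξ * c⁻¹ * a) *
          (padicChar p (z * (c⁻¹ * ξ + κ)) * indZ p z)) a, integral_const_mul,
          wv_int_char p ν hν]
    ring
  rw [hat]
  refine ⟨?_, ?_, ?_⟩
  · have h1 := wv_char_meas p
    have h2 := wv_indZ_meas p
    fun_prop
  · intro γ ξ
    by_cases h : ‖c⁻¹ * ξ + κ‖ ≤ 1
    · have hn : ‖c⁻¹ * ξ‖ = p := by
        have : c⁻¹ * ξ = (c⁻¹ * ξ + κ) + (-κ) := by ring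
        rw [this, Padic.add_eq_max_of_ne, norm_neg, hkn]
        · exact max_eq_right (h.trans hp1.le)
        · rw [norm_neg, hkn]; linarith
      have hξ : ‖ξ‖ = (p : ℝ) ^ (j + 1) := by
        rw [norm_mul, norm_inv, hcn] at hn
        have : (p : ℝ) ^ j ≠ 0 := by positivity
        rw [zpow_add₀ (by positivity), zpow_one]
        field_simp at hn
        linarith
      rw [hξ, wv_cpow]
      push_cast
      rfl
    · simp [indZ, h]
  · intro x
    have e1 : ∀ ξ, padicChar p (-(ξ * x)) *
        (C * P * padicChar p (ξ * c⁻¹ * a) * indZ p (c⁻¹ * ξ + κ))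
        = (fun w => (fun z => C * P * padicChar p (κ * (c * x - a)) *
          (padicChar p (z * (-(c * x - a))) * indZ p z)) (w + κ)) (c⁻¹ * ξ) := by
      intro ξ
      simp only
      have h3 : padicChar p (-(ξ * x)) * padicChar p (ξ * c⁻¹ * a)
          = padicChar p (κ * (c * x - a)) * padicChar p ((c⁻¹ * ξ + κ) * (-(c * x - a))) := by
        rw [← wv_char_add, ← wv_char_add]
        congr 1
        field_simp
        ring
      linear_combination (C * P * indZ p (c⁻¹ * ξ + κ)) * h3
    rw [integral_congr_ae (Filter.Eventually.of_forall e1),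
      hD (fun w => (fun z => C * P * padicChar p (κ * (c * x - a)) *
          (padicChar p (z * (-(c * x - a))) * indZ p z)) (w + κ)), integral_add_right_eq_self (μ := ν) (fun z => C * P * padicChar p (κ * (c * x - a)) *
          (padicChar p (z * (-(c * x - a))) * indZ p z)) κ, integral_const_mul,
          wv_int_char p ν hν, wv_indZ_neg]
    linear_combination (P * padicChar p (κ * (c * x - a)) * indZ p (c * x - a)) * hDC


theorem wv_prod_int
    (μp : ∀ q : Nat.Primes, MeasureTheory.Measure ℚ_[(q : ℕ)])
    (hHaar : ∀ q, (μp q).IsAddHaarMeasure)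
    (μ : MeasureTheory.Measure FiniteAdele)
    (hμ : ∀ S : Finset Nat.Primes,
      ∀ B : ∀ q : Nat.Primes, Set ℚ_[(q : ℕ)], (∀ q, MeasurableSet (B q)) →
      μ {x : FiniteAdele | (∀ q ∈ S, x.1 q ∈ B q) ∧ ∀ q ∉ S, ‖x.1 q‖ ≤ 1}
        = ∏ q ∈ S, μp q (B q))
    (T : Finset Nat.Primes) (g : ∀ q : Nat.Primes, ℚ_[(q : ℕ)] → ℂ)
    (hg : ∀ q, Measurable (g q)) (hT : ∀ q ∉ T, g q = indZ q) :
    ∫ x : FiniteAdele, ∏' q, g q (x.1 q) ∂μ = ∏ q ∈ T, ∫ y, g q y ∂(μp q) := by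
  have hmeas : ∀ q : Nat.Primes, Measurable (fun x : FiniteAdele => x.1 q) := fun q =>
    (measurable_pi_apply q).comp measurable_subtype_coe
  let E : Set FiniteAdele := {x | ∀ q ∉ T, ‖x.1 q‖ ≤ 1}
  have hE : MeasurableSet E := by
    have : E = ⋂ q : Nat.Primes, ⋂ (_ : q ∉ T), {x : FiniteAdele | ‖x.1 q‖ ≤ 1} := by
      ext x; simp [E]
    rw [this]
    exact MeasurableSet.iInter fun q => MeasurableSet.iInter fun _ =>
      measurableSet_le (hmeas q).norm measurable_const
  let φ : FiniteAdele → (∀ q : T, ℚ_[((q : Nat.Primes) : ℕ)]) := fun x q => x.1 q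
  have hφ : Measurable φ := measurable_pi_lambda _ fun q => hmeas q
  have hpi : Measure.pi (fun q : T => μp q) = (μ.restrict E).map φ := by
    apply Measure.pi_eq
    intro s hs
    rw [Measure.map_apply hφ (MeasurableSet.univ_pi hs), Measure.restrict_apply
      (hφ (MeasurableSet.univ_pi hs))]
    let B : ∀ q : Nat.Primes, Set ℚ_[(q : ℕ)] := fun q => if h : q ∈ T then s ⟨q, h⟩ else Set.univ
    have hB : ∀ q, MeasurableSet (B q) := by
      intro q
      by_cases h : q ∈ T
      · simp only [B, dif_pos h]; exact hs _
      · simp only [B, dif_neg h]; exact MeasurableSet.univ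
    have := hμ T B hB
    rw [← Finset.prod_coe_sort] at this
    convert this using 2
    · ext x
      simp only [Set.mem_inter_iff, Set.mem_preimage, Set.mem_univ_pi, Set.mem_ofPred_eq, φ, E, B]
      refine and_congr_left fun _ => ?_
      constructor
      · intro h q hq
        rw [dif_pos hq]; exact h ⟨q, hq⟩
      · intro h q
        have := h q q.2
        rwa [dif_pos q.2] at this
    · rename_i q _
      simp [B]
  have h1 : ∀ x : FiniteAdele, ∏' q, g q (x.1 q)
      = E.indicator (fun x => ∏ q : T, g q (φ x q)) x := by
    intro x
    by_cases hx : x ∈ E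
    · rw [Set.indicator_of_mem hx, tprod_eq_prod (s := T), ← Finset.prod_coe_sort]
      intro q hq
      rw [hT q hq]
      simp [indZ, hx q hq]
    · rw [Set.indicator_of_notMem hx]
      have hx' : ∃ q, q ∉ T ∧ ¬ ‖x.1 q‖ ≤ 1 := by
        simpa [E] using hx
      obtain ⟨q, hq, hn⟩ := hx'
      have hfin : {q : Nat.Primes | ¬ ‖x.1 q‖ ≤ 1}.Finite := x.2
      rw [tprod_eq_prod (s := T ∪ hfin.toFinset)]
      · apply Finset.prod_eq_zero (i := q)
        · simp; right; simpa using hn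
        · rw [hT q hq]; simp [indZ, hn]
      · intro r hr
        simp only [Finset.mem_union, Set.Finite.mem_toFinset, Set.mem_ofPred_eq, not_or,
          not_not] at hr
        rw [hT r hr.1]; simp [indZ, hr.2]
  simp_rw [h1]
  rw [integral_indicator hE]
  have hgm : Measurable (fun y : (∀ q : T, ℚ_[((q : Nat.Primes) : ℕ)]) => ∏ q : T, g q (y q)) :=
    Finset.measurable_prod _ fun q _ => (hg q).comp (measurable_pi_apply q)
  rw [← integral_map (f := fun y : (∀ q : T, ℚ_[((q : Nat.Primes) : ℕ)]) => ∏ q : T, g q (y q))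
    hφ.aemeasurable hgm.aestronglyMeasurable, ← hpi,
    integral_fintype_prod_eq_prod (f := fun q : T => g q),
    Finset.prod_coe_sort T (fun q => ∫ y, g q y ∂(μp q))]

theorem wv_tprod_mul (u v : Nat.Primes → ℂ) (U V : Finset Nat.Primes)
    (hu : ∀ q ∉ U, u q = 1) (hv : ∀ q ∉ V, v q = 1) :
    (∏' q, u q) * (∏' q, v q) = ∏' q, u q * v q := by
  rw [tprod_eq_prod (s := U ∪ V) (f := u) (fun q hq => hu q (by simp at hq; exact hq.1)),
    tprod_eq_prod (s := U ∪ V) (f := v) (fun q hq => hv q (by simp at hq; exact hq.2)),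
    tprod_eq_prod (s := U ∪ V), Finset.prod_mul_distrib]
  intro q hq
  simp at hq
  rw [hu q hq.1, hv q hq.2, mul_one]

theorem wv_bad (x : FiniteAdele) : ∃ U : Finset Nat.Primes, ∀ q ∉ U, ‖x.1 q‖ ≤ 1 := by
  have hfin : {q : Nat.Primes | ¬ ‖x.1 q‖ ≤ 1}.Finite := x.2
  refine ⟨hfin.toFinset, fun q hq => ?_⟩
  by_contra h
  exact hq (by simpa using h)

theorem wv_ind_one (x : ℚ_[p]) (hx : ‖x‖ ≤ 1) : indZ p x = 1 := by simp [indZ, hx]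

theorem wv_char_ind (x y : ℚ_[p]) (hx : ‖x‖ ≤ 1) :
    padicChar p (x * y) * indZ p y = indZ p y := by
  unfold indZ
  split_ifs with h
  · rw [wv_char_one, mul_one]
    rw [norm_mul]
    exact mul_le_one₀ hx (norm_nonneg _) h
  · simp

theorem wv_cpow_prod (S : Finset Nat.Primes) (j : Nat.Primes → ℤ) (γ : ℂ) :
    (((∏ q ∈ S, ((q : ℕ) : ℝ) ^ (j q + 1) : ℝ)) : ℂ) ^ γ
      = ∏ q ∈ S, ((q : ℕ) : ℂ) ^ (γ * ((j q : ℂ) + 1)) := by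
  induction S using Finset.induction_on with
  | empty => simp
  | insert q S hq ih =>
    rw [Finset.prod_insert hq, Finset.prod_insert hq, ← ih, Complex.ofReal_mul,
      Complex.mul_cpow_ofReal_nonneg (by positivity) (Finset.prod_nonneg fun i _ => by positivity),
      wv_cpow q]
    push_cast
    rfl

/-- The wavelet `Ψ` is an eigenfunction of the adelic fractional
operator `D^γ = 𝓕̃⁻¹ ∘ |ξ|^γ ∘ 𝓕̃`, with
`D^γΨ = (∏_{q ≤ m} q^{γ_q(j_q+1)}) Ψ`; in particular, if all `γ_q = γ` then
`D^γΨ = (∏_{q ≤ m} q^{j_q+1})^γ Ψ`.  `μ` is the Haar measure on `Ã` normalized as the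
product of the Haar measures `μ_p` with `μ_p(ℤ_p) = 1`, and `S` is the finite set of
primes `q ≤ m`. -/
theorem wavelet_eigenfunction_fractional
    (μp : ∀ q : Nat.Primes, MeasureTheory.Measure ℚ_[(q : ℕ)])
    (hHaar : ∀ q, (μp q).IsAddHaarMeasure)
    (hnorm : ∀ q, μp q {x : ℚ_[(q : ℕ)] | ‖x‖ ≤ 1} = 1)
    (μ : MeasureTheory.Measure FiniteAdele)
    (hμ : ∀ S : Finset Nat.Primes,
      ∀ B : ∀ q : Nat.Primes, Set ℚ_[(q : ℕ)], (∀ q, MeasurableSet (B q)) →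
      μ {x : FiniteAdele | (∀ q ∈ S, x.1 q ∈ B q) ∧ ∀ q ∉ S, ‖x.1 q‖ ≤ 1}
        = ∏ q ∈ S, μp q (B q))
    (m : Nat.Primes) (S : Finset Nat.Primes)
    (hS : ∀ q : Nat.Primes, q ∈ S ↔ (q : ℕ) ≤ (m : ℕ))
    (γ : Nat.Primes → ℂ)
    (k : Nat.Primes → ℕ) (j : Nat.Primes → ℤ) (a : ∀ q : Nat.Primes, ℚ_[(q : ℕ)])
    (hk : ∀ q : Nat.Primes, (q : ℕ) ≤ (m : ℕ) → 1 ≤ k q ∧ k q ≤ (q : ℕ) - 1)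
    (hj : ∀ q : Nat.Primes, (q : ℕ) ≤ (m : ℕ) → 0 ≤ j q)
    (ha : ∀ q : Nat.Primes, (q : ℕ) ≤ (m : ℕ) → a q ∈ Ip q) :
    (FtildeInv μ (fun ξ => symbGamma m γ ξ * Ftilde μ (PsiWav m k j a) ξ)
      =ᵐ[μ] fun x =>
        (∏ q ∈ S, ((q : ℕ) : ℂ) ^ (γ q * ((j q : ℂ) + 1))) * PsiWav m k j a x) ∧
    (∀ γ0 : ℂ, (∀ q ∈ S, γ q = γ0) →
      FtildeInv μ (fun ξ => symbGamma m γ ξ * Ftilde μ (PsiWav m k j a) ξ)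
        =ᵐ[μ] fun x =>
          (((∏ q ∈ S, ((q : ℕ) : ℝ) ^ (j q + 1) : ℝ)) : ℂ) ^ γ0 * PsiWav m k j a x) := by
  have main : FtildeInv μ (fun ξ => symbGamma m γ ξ * Ftilde μ (PsiWav m k j a) ξ)
      = fun x =>
        (∏ q ∈ S, ((q : ℕ) : ℂ) ^ (γ q * ((j q : ℂ) + 1))) * PsiWav m k j a x := by
    let f : ∀ q : Nat.Primes, ℚ_[(q : ℕ)] → ℂ := fun q =>
      if (q : ℕ) ≤ (m : ℕ) then kozyrev q (k q) (j q) (a q) else indZ q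
    have f_off : ∀ q ∉ S, f q = indZ q := by
      intro q hq
      rw [hS] at hq
      simp only [f, if_neg hq]
    have f_on : ∀ q ∈ S, f q = kozyrev q (k q) (j q) (a q) := by
      intro q hq
      rw [hS] at hq
      simp only [f, if_pos hq]
    have hPsi : ∀ x, PsiWav m k j a x = ∏' q, f q (x.1 q) := by
      intro x
      unfold PsiWav
      congr 1
      ext q
      simp only [f]
      split_ifs <;> rfl
    let h : ∀ q : Nat.Primes, ℚ_[(q : ℕ)] → ℂ := fun q => wvHat q (μp q) (f q)
    have h_off : ∀ q ∉ S, h q = indZ q := by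
      intro q hq
      have := hHaar q
      simp only [h, f_off q hq]
      exact wv_hat_ind q (μp q) (hnorm q)
    have f_meas : ∀ q, Measurable (f q) := by
      intro q
      have h1 := wv_char_meas q
      have h2 := wv_indZ_meas q
      by_cases hq : q ∈ S
      · rw [f_on q hq]
        unfold kozyrev
        fun_prop
      · rw [f_off q hq]
        exact h2
    have h_meas : ∀ q, Measurable (h q) := by
      intro q
      have := hHaar q
      by_cases hq : q ∈ S
      · simp only [h]
        rw [f_on q hq]
        exact (wv_hat_koz q (μp q) (hnorm q) (k q) (j q) (a q) (hk q ((hS q).1 hq))).1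
      · rw [h_off q hq]
        exact wv_indZ_meas q
    have h_inv : ∀ q x, ∫ ξ, padicChar q (-(ξ * x)) * h q ξ ∂(μp q) = f q x := by
      intro q x
      have := hHaar q
      by_cases hq : q ∈ S
      · simp only [h]
        rw [f_on q hq]
        exact (wv_hat_koz q (μp q) (hnorm q) (k q) (j q) (a q) (hk q ((hS q).1 hq))).2.2 x
      · simp only [h]
        rw [f_off q hq]
        exact wv_inv_ind q (μp q) (hnorm q) x
    let c : Nat.Primes → ℂ := fun q =>
      if q ∈ S then ((q : ℕ) : ℂ) ^ (γ q * ((j q : ℂ) + 1)) else 1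
    have hA : ∀ (q : Nat.Primes) (ξ : ℚ_[(q : ℕ)]), (if (q : ℕ) ≤ (m : ℕ) then ((‖ξ‖ : ℝ) : ℂ) ^ (γ q) else indZ q ξ) * h q ξ
        = c q * h q ξ := by
      intro q ξ
      have := hHaar q
      by_cases hq : q ∈ S
      · rw [if_pos ((hS q).1 hq)]
        simp only [h, c, if_pos hq]
        rw [f_on q hq]
        exact (wv_hat_koz q (μp q) (hnorm q) (k q) (j q) (a q) (hk q ((hS q).1 hq))).2.1 _ ξ
      · rw [if_neg (fun h => hq ((hS q).2 h)), h_off q hq]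
        simp only [c, if_neg hq, indZ]
        split_ifs <;> simp
    have hF : ∀ ξ, Ftilde μ (PsiWav m k j a) ξ = ∏' q, h q (ξ.1 q) := by
      intro ξ
      obtain ⟨U, hU⟩ := wv_bad ξ
      let g : ∀ q : Nat.Primes, ℚ_[(q : ℕ)] → ℂ := fun q y => padicChar q (ξ.1 q * y) * f q y
      have e1 : ∀ x : FiniteAdele, chiTilde ξ x * PsiWav m k j a x
          = ∏' q, g q (x.1 q) := by
        intro x
        obtain ⟨V, hV⟩ := wv_bad x
        rw [hPsi]
        unfold chiTilde
        rw [wv_tprod_mul _ _ (U ∪ V) (S ∪ V)]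
        · intro q hq
          simp at hq
          apply wv_char_one
          rw [norm_mul]
          exact mul_le_one₀ (hU q hq.1) (norm_nonneg _) (hV q hq.2)
        · intro q hq
          simp at hq
          rw [f_off q hq.1]
          exact wv_ind_one q _ (hV q hq.2)
      unfold Ftilde
      rw [integral_congr_ae (Filter.Eventually.of_forall e1),
        wv_prod_int μp hHaar μ hμ (S ∪ U) g, tprod_eq_prod (s := S ∪ U)]
      · rfl
      · intro q hq
        simp at hq
        rw [h_off q hq.1]
        exact wv_ind_one q _ (hU q hq.2)
      · intro q
        have h1 := wv_char_meas q
        have h2 := f_meas q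
        simp only [g]
        fun_prop
      · intro q hq
        simp at hq
        ext y
        simp only [g, f_off q hq.1]
        exact wv_char_ind q _ _ (hU q hq.2)
    ext x
    obtain ⟨U, hU⟩ := wv_bad x
    let g : ∀ q : Nat.Primes, ℚ_[(q : ℕ)] → ℂ := fun q y =>
      padicChar q (-(y * x.1 q)) * (c q * h q y)
    have e1 : ∀ ξ : FiniteAdele, (∏' q : Nat.Primes, padicChar q (-(ξ.1 q * x.1 q))) *
          (symbGamma m γ ξ * Ftilde μ (PsiWav m k j a) ξ)
          = ∏' q, g q (ξ.1 q) := by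
      intro ξ
      obtain ⟨V, hV⟩ := wv_bad ξ
      rw [hF]
      unfold symbGamma
      have hh : ∀ q ∉ S ∪ V, h q (ξ.1 q) = 1 := by
        intro q hq
        simp at hq
        rw [h_off q hq.1]
        exact wv_ind_one q _ (hV q hq.2)
      rw [wv_tprod_mul _ (fun q => h q (ξ.1 q)) (S ∪ V) (S ∪ V) _ hh]
      · simp_rw [hA]
        rw [wv_tprod_mul _ _ (U ∪ V) (S ∪ V)]
        · intro q hq
          simp at hq
          apply wv_char_one
          rw [norm_neg, norm_mul]
          exact mul_le_one₀ (hV q hq.2) (norm_nonneg _) (hU q hq.1)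
        · intro q hq
          rw [hh q hq]
          simp at hq
          simp [c, hq.1]
      · intro q hq
        simp at hq
        rw [if_neg (fun h => hq.1 ((hS q).2 h))]
        exact wv_ind_one q _ (hV q hq.2)
    unfold FtildeInv
    rw [integral_congr_ae (Filter.Eventually.of_forall e1),
        wv_prod_int μp hHaar μ hμ (S ∪ U) g, hPsi, tprod_eq_prod (s := S ∪ U)]
    · have e2 : ∀ q, ∫ y, g q y ∂(μp q)
          = c q * f q (x.1 q) := by
        intro q
        rw [← h_inv, ← integral_const_mul]
        congr 1
        ext y
        simp only [g]
        ring
      simp_rw [e2]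
      rw [Finset.prod_mul_distrib]
      congr 1
      rw [← Finset.prod_subset (Finset.subset_union_left (s₁ := S) (s₂ := U))]
      · apply Finset.prod_congr rfl
        intro q hq
        simp only [c, if_pos hq]
      · intro q _ hq
        simp only [c, if_neg hq]
    · intro q hq
      simp at hq
      rw [f_off q hq.1]
      exact wv_ind_one q _ (hU q hq.2)
    · intro q
      have h1 := wv_char_meas q
      have h2 := h_meas q
      simp only [g]
      fun_prop
    · intro q hq
      simp at hq
      ext y
      simp only [g, h_off q hq.1, c, if_neg hq.1, one_mul]
      have : -(y * x.1 q) = (-x.1 q) * y := by ring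
      rw [this]
      exact wv_char_ind q _ _ (by rw [norm_neg]; exact hU q hq.2)
  refine ⟨by rw [main], fun γ0 hγ => ?_⟩
  rw [main, wv_cpow_prod]
  have : ∏ q ∈ S, ((q : ℕ) : ℂ) ^ (γ q * ((j q : ℂ) + 1))
      = ∏ q ∈ S, ((q : ℕ) : ℂ) ^ (γ0 * ((j q : ℂ) + 1)) :=
    Finset.prod_congr rfl fun q hq => by rw [hγ q hq]
  rw [this]
end
end

section
/- Call ζ : 𝔸 → ℂ an elementary adelic Lizorkin test function if ζ(x) = ζ_∞(x_∞) · ∏_p ζ_p(x_p), where ζ_∞ is a Schwartz function on ℝ with ∫_ℝ t^n ζ_∞(t) dt = 0 for every integer n ≥ 0, each ζ_p : ℚ_p → ℂ is locally constant with compact support, there is a prime P such that ζ_p = 1_{ℤ_p} for all p > P, and ∫_{ℚ_p} ζ_p dμ_p = 0 for all p ≤ P. Then every finite linear combination ζ of elementary adelic Lizorkin test functions can be written as a finite sum ζ(x) = Σ_{i=1}^N c_i(x_∞) · W_i(x'), where x' = (x_p)_p is the finite-adele component of x, each c_i is a Schwartz function on ℝ all of whose moments ∫ t^n c_i(t) dt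 vanish, and each W_i is a wavelet function of the form x' ↦ ∏_{q∈S_i} ψ^{(0)}_{k_q; j_q a_q}(x_q) · ∏_{q∉S_i} 1_{ℤ_q}(x_q) with S_i a finite set of primes, k_q ∈ {1,…,q−1}, j_q ∈ ℤ, a_q ∈ I_q. -/
open MeasureTheory Complex
open scoped Classical

noncomputable section

variable (p : ℕ) [Fact p.Prime]

/-- The adele ring of `ℚ`, as the restricted product of `ℝ` and of the fields `ℚ_p`
with respect to the subrings `ℤ_p`. -/
def Adele : Type :=
  {x : ℝ × (∀ q : Nat.Primes, ℚ_[(q : ℕ)]) //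
    ∀ᶠ q : Nat.Primes in Filter.cofinite, ‖x.2 q‖ ≤ 1}

/-- Wavelet functions on the finite-adele component:
`x' ↦ ∏_{q ∈ S} ψ⁰_{k_q;j_q a_q}(x_q) ∏_{q ∉ S} 1_{ℤ_q}(x_q)`, for `S` a finite set of
primes, `k_q ∈ {1,…,q-1}`, `j_q ∈ ℤ`, `a_q ∈ I_q`. -/
def waveletProdSet : Set ((∀ q : Nat.Primes, ℚ_[(q : ℕ)]) → ℂ) :=
  {f | ∃ c : ∀ q : Nat.Primes,
        Option ({k : ℕ // 1 ≤ k ∧ k ≤ (q : ℕ) - 1} × ℤ × (Ip q)),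
      {q : Nat.Primes | c q ≠ none}.Finite ∧
      f = fun y => ∏' q : Nat.Primes,
        (c q).elim (indZ q (y q)) (fun t => kozyrev q t.1 t.2.1 t.2.2 (y q))}

/-- The set of elementary adelic Lizorkin test functions on `𝔸`:  products
`ζ_∞(x_∞) ∏_q ζ_q(x_q)` where `ζ_∞` is a Schwartz function with all moments vanishing,
every `ζ_q` is locally constant with compact support, `ζ_q = 1_{ℤ_q}` for all primes
`q > P`, and `∫ ζ_q dμ_q = 0` for all primes `q ≤ P`. -/
def elementaryAdelicLizorkinSet
    (μp : ∀ q : Nat.Primes, MeasureTheory.Measure ℚ_[(q : ℕ)]) : Set (Adele → ℂ) :=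
  {f | ∃ (ζR : SchwartzMap ℝ ℂ) (ζ : ∀ q : Nat.Primes, ℚ_[(q : ℕ)] → ℂ),
    (∀ n : ℕ, ∫ t : ℝ, (t : ℂ) ^ n * ζR t = 0) ∧
    (∀ q, IsLocallyConstant (ζ q)) ∧ (∀ q, HasCompactSupport (ζ q)) ∧
    (∃ P : Nat.Primes,
      (∀ q : Nat.Primes, (P : ℕ) < (q : ℕ) → ζ q = fun x => indZ q x) ∧
      (∀ q : Nat.Primes, (q : ℕ) ≤ (P : ℕ) → ∫ x, ζ q x ∂(μp q) = 0)) ∧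
    f = fun x : Adele => ζR x.1.1 * ∏' q : Nat.Primes, ζ q (x.1.2 q)}

namespace LizAux

lemma le1_add {x y : ℚ_[p]} (hx : ‖x‖ ≤ 1) (hy : ‖y‖ ≤ 1) : ‖x + y‖ ≤ 1 :=
  (Padic.nonarchimedean x y).trans (max_le hx hy)

lemma le1_sub {x y : ℚ_[p]} (hx : ‖x‖ ≤ 1) (hy : ‖y‖ ≤ 1) : ‖x - y‖ ≤ 1 := by
  rw [sub_eq_add_neg]; exact le1_add p hx (by rwa [norm_neg])

lemma le1_mul {x y : ℚ_[p]} (hx : ‖x‖ ≤ 1) (hy : ‖y‖ ≤ 1) : ‖x * y‖ ≤ 1 := by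
  rw [norm_mul]; exact mul_le_one₀ hx (norm_nonneg _) hy

lemma le1_nat (n : ℕ) : ‖(n : ℚ_[p])‖ ≤ 1 := by
  simpa using Padic.norm_int_le_one (p := p) (n : ℤ)

lemma p_ne : (p : ℚ_[p]) ≠ 0 := by
  exact_mod_cast (Fact.out : p.Prime).ne_zero

lemma le1_int_div (s : ℤ) (N : ℕ) :
    ‖(s : ℚ_[p]) / (p : ℚ_[p]) ^ N‖ ≤ 1 ↔ ((p : ℤ) ^ N) ∣ s := by
  rw [← Padic.norm_int_le_pow_iff_dvd, norm_div, Padic.norm_p_pow, div_le_one]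
  have := (Fact.out : p.Prime).pos
  positivity

lemma exists_approx (y : ℚ_[p]) (hy : ‖y‖ ≤ 1) (N : ℕ) :
    ∃ a : ℕ, a < p ^ N ∧ ‖(y - a) / (p : ℚ_[p]) ^ N‖ ≤ 1 := by
  obtain ⟨u, rfl⟩ : ∃ u : ℤ_[p], (u : ℚ_[p]) = y := ⟨⟨y, hy⟩, rfl⟩
  have h := PadicInt.appr_spec (p := p) N u
  refine ⟨PadicInt.appr u N, PadicInt.appr_lt _ _, ?_⟩
  obtain ⟨z, hz⟩ := Ideal.mem_span_singleton.1 h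
  have h2 := congrArg (fun t : ℤ_[p] => (t : ℚ_[p])) hz
  push_cast at h2
  have h3 : ((u : ℚ_[p]) - (PadicInt.appr u N : ℕ)) / (p : ℚ_[p]) ^ N = z := by
    rw [h2]
    exact mul_div_cancel_left₀ _ (pow_ne_zero _ (p_ne p))
  rw [h3]; exact z.2

lemma exists_Ip (c : ℚ_[p]) : ∃ a ∈ Ip p, ‖c - a‖ ≤ 1 := by
  have hp1 : (1 : ℝ) < p := by exact_mod_cast (Fact.out : p.Prime).one_lt
  obtain ⟨n, hn⟩ := pow_unbounded_of_one_lt ‖c‖ hp1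
  have h1 : ‖(p : ℚ_[p]) ^ n * c‖ ≤ 1 := by
    rw [norm_mul, Padic.norm_p_pow, zpow_neg, zpow_natCast, inv_mul_le_one₀ (by positivity)]
    exact hn.le
  obtain ⟨a, ha, h⟩ := exists_approx p _ h1 n
  refine ⟨(a : ℚ_[p]) / (p : ℚ_[p]) ^ n, ⟨a, n, ha, rfl⟩, ?_⟩
  have h0 := pow_ne_zero n (p_ne p)
  rwa [sub_div, mul_div_cancel_left₀ _ h0] at h

lemma char_eq (x : ℚ_[p]) (A : ℤ) (n : ℕ) (h : ‖x - (A : ℚ_[p]) / (p : ℚ_[p]) ^ n‖ ≤ 1) :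
    padicChar p x = Complex.exp (2 * Real.pi * Complex.I * ((A : ℂ) / (p : ℂ) ^ n)) := by
  have hp0 : (0 : ℤ) < (p : ℤ) ^ n := by
    have := (Fact.out : p.Prime).pos
    positivity
  have hpQ : (p : ℚ) ≠ 0 := by exact_mod_cast (Fact.out : p.Prime).ne_zero
  have hpC : (p : ℂ) ≠ 0 := by exact_mod_cast (Fact.out : p.Prime).ne_zero
  have h0 := pow_ne_zero n (p_ne p)
  have hex : ∃ r : ℚ, (0 ≤ r ∧ r < 1 ∧ ∃ (m : ℤ) (n : ℕ), r = m / p ^ n) ∧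
      ‖x - (r : ℚ_[p])‖ ≤ 1 := by
    refine ⟨((A % (p : ℤ) ^ n : ℤ) : ℚ) / p ^ n, ⟨?_, ?_, _, _, rfl⟩, ?_⟩
    · have := Int.emod_nonneg A hp0.ne'
      positivity
    · rw [div_lt_one (by exact_mod_cast hp0)]
      exact_mod_cast Int.emod_lt_of_pos A hp0
    · have e : x - (((A % (p : ℤ) ^ n : ℤ) : ℚ) / p ^ n : ℚ) =
          (x - (A : ℚ_[p]) / (p : ℚ_[p]) ^ n) + ((A / (p : ℤ) ^ n : ℤ) : ℚ_[p]) := by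
        have e2 : (A : ℚ_[p]) = ((p : ℤ) ^ n * (A / (p : ℤ) ^ n) + A % (p : ℤ) ^ n : ℤ) := by
          rw [Int.mul_ediv_add_emod]
        have hpp := p_ne p
        rw [e2]; push_cast; field_simp; ring
      rw [e]
      exact le1_add p h (Padic.norm_int_le_one _)
  have hf : padicFract p x = hex.choose := by
    unfold padicFract; rw [dif_pos hex]
  obtain ⟨⟨-, -, m, k, hr⟩, h2⟩ := hex.choose_spec
  rw [← hf] at hr h2
  have h3 := le1_sub p h h2
  have h4 : ‖((m * (p : ℤ) ^ n - A * (p : ℤ) ^ k : ℤ) : ℚ_[p]) / (p : ℚ_[p]) ^ (n + k)‖ ≤ 1 := by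
    convert h3 using 2
    rw [hr]; push_cast
    have hpp := p_ne p
    field_simp; ring
  rw [le1_int_div] at h4
  obtain ⟨s, hs⟩ := h4
  have h5 : (padicFract p x : ℂ) = (A : ℂ) / (p : ℂ) ^ n + s := by
    rw [hr]; push_cast
    have hs' := congrArg (fun t : ℤ => (t : ℂ)) hs
    push_cast at hs'
    field_simp
    linear_combination hs'
  unfold padicChar
  rw [h5, Complex.exp_eq_exp_iff_exists_int]
  exact ⟨s, by ring⟩

lemma geom (s : ℤ) :
    ∑ k ∈ Finset.range p, Complex.exp (2 * Real.pi * Complex.I * ((k * s : ℂ) / (p : ℂ))) =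
      if (p : ℤ) ∣ s then (p : ℂ) else 0 := by
  have hpC : (p : ℂ) ≠ 0 := by exact_mod_cast (Fact.out : p.Prime).ne_zero
  set z := Complex.exp (2 * Real.pi * Complex.I * ((s : ℂ) / (p : ℂ))) with hz
  have h1 : ∀ k : ℕ, Complex.exp (2 * Real.pi * Complex.I * ((k * s : ℂ) / (p : ℂ))) = z ^ k := by
    intro k
    rw [hz, ← Complex.exp_nat_mul]; congr 1; ring
  simp_rw [h1]
  split_ifs with hd
  · obtain ⟨t, rfl⟩ := hd
    have : z = 1 := by
      rw [hz, Complex.exp_eq_one_iff]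
      exact ⟨t, by push_cast; field_simp⟩
    simp [this]
  · have hz1 : z ≠ 1 := by
      intro h
      rw [hz, Complex.exp_eq_one_iff] at h
      obtain ⟨t, ht⟩ := h
      apply hd
      refine ⟨t, ?_⟩
      have hpi : (2 * Real.pi * Complex.I : ℂ) ≠ 0 := Complex.two_pi_I_ne_zero
      have : (s : ℂ) / p = t := by
        apply mul_left_cancel₀ hpi; rw [ht]; ring
      rw [div_eq_iff hpC] at this
      have : (s : ℂ) = ((p * t : ℤ) : ℂ) := by rw [this]; push_cast; ring
      exact_mod_cast this
    have hzp : z ^ p = 1 := by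
      rw [hz, ← Complex.exp_nat_mul, Complex.exp_eq_one_iff]
      exact ⟨s, by field_simp⟩
    have := mul_geom_sum z p
    rw [hzp, sub_self] at this
    exact (mul_eq_zero.1 this).resolve_left (sub_ne_zero.2 hz1)

/-- Indicator of the ball `p^j (c + ℤ_p)`. -/
def E (j : ℤ) (c : ℚ_[p]) : ℚ_[p] → ℂ := fun x => indZ p ((p : ℚ_[p]) ^ (-j) * x - c)

/-- set of Kozyrev wavelets. -/
def KS : Set (ℚ_[p] → ℂ) :=
  {f | ∃ t : {k : ℕ // 1 ≤ k ∧ k ≤ p - 1} × ℤ × (Ip p), f = kozyrev p t.1 t.2.1 t.2.2}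

lemma E_congr (j : ℤ) (c d : ℚ_[p]) (h : ‖c - d‖ ≤ 1) : E p j c = E p j d := by
  funext x
  unfold E indZ
  have : ‖(p : ℚ_[p]) ^ (-j) * x - c‖ ≤ 1 ↔ ‖(p : ℚ_[p]) ^ (-j) * x - d‖ ≤ 1 := by
    constructor
    · intro h1; simpa using le1_add p h1 h
    · intro h1; simpa using le1_sub p h1 h
  simp only [this]

lemma char_sum (y b : ℚ_[p]) (hy : ‖y‖ ≤ 1) (hb : ‖b‖ ≤ 1) :
    ∑ k ∈ Finset.range p, padicChar p ((k : ℚ_[p]) / (p : ℚ_[p]) * (-b)) *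
      padicChar p ((k : ℚ_[p]) / (p : ℚ_[p]) * y) = p * indZ p ((y - b) / p) := by
  obtain ⟨r, -, hr⟩ := exists_approx p y hy 1
  obtain ⟨s, -, hs⟩ := exists_approx p b hb 1
  have hpp := p_ne p
  rw [pow_one] at hr hs
  have e1 : ∀ k : ℕ, padicChar p ((k : ℚ_[p]) / (p : ℚ_[p]) * y) =
      Complex.exp (2 * Real.pi * Complex.I * (((k * r : ℤ) : ℂ) / (p : ℂ) ^ 1)) := by
    intro k
    apply char_eq
    convert le1_mul p (le1_nat p k) hr using 2
    push_cast; field_simp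
  have e2 : ∀ k : ℕ, padicChar p ((k : ℚ_[p]) / (p : ℚ_[p]) * (-b)) =
      Complex.exp (2 * Real.pi * Complex.I * (((- (k * s) : ℤ) : ℂ) / (p : ℂ) ^ 1)) := by
    intro k
    apply char_eq
    have e : (k : ℚ_[p]) / (p : ℚ_[p]) * (-b) - ((- (k * s) : ℤ) : ℚ_[p]) / (p : ℚ_[p]) ^ 1 =
        -((k : ℚ_[p]) * ((b - s) / p)) := by
      push_cast; ring
    rw [e, norm_neg]
    exact le1_mul p (le1_nat p k) hs
  have e3 : ∀ k : ℕ, padicChar p ((k : ℚ_[p]) / (p : ℚ_[p]) * (-b)) *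
      padicChar p ((k : ℚ_[p]) / (p : ℚ_[p]) * y) =
      Complex.exp (2 * Real.pi * Complex.I * ((k * ((r - s : ℤ) : ℂ) : ℂ) / (p : ℂ))) := by
    intro k
    rw [e1, e2, ← Complex.exp_add]; congr 1; push_cast; ring
  simp_rw [e3]
  rw [geom]
  have e4 : ‖(y - b) / (p : ℚ_[p])‖ ≤ 1 ↔ (p : ℤ) ∣ (r - s : ℤ) := by
    have := le1_int_div p (r - s : ℤ) 1
    rw [pow_one, pow_one] at this
    rw [← this]
    have e : (y - b) / (p : ℚ_[p]) = (y - r) / p - (b - s) / p + ((r - s : ℤ) : ℚ_[p]) / p := by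
      push_cast; ring
    have h5 := le1_sub p hr hs
    constructor
    · intro h
      have := le1_sub p h h5
      rw [e] at this; simpa using this
    · intro h
      rw [e]; exact le1_add p h5 h
  unfold indZ
  simp only [e4, mul_ite, mul_one, mul_zero]

lemma step (j : ℤ) (c : ℚ_[p]) :
    E p (j + 1) c - (p : ℂ)⁻¹ • E p j (p * c) ∈ Submodule.span ℂ (KS p) := by
  have hpp := p_ne p
  have hpC : (p : ℂ) ≠ 0 := by exact_mod_cast (Fact.out : p.Prime).ne_zero
  have hp0 := (Fact.out : p.Prime).pos
  obtain ⟨a, ha, hac⟩ := exists_Ip p (p * c)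
  rw [E_congr p j _ a hac]
  set S : ℂ := (((p : ℝ) ^ ((j : ℝ) / 2) : ℝ) : ℂ) with hS
  have hS0 : S ≠ 0 := by
    rw [hS]; norm_cast; positivity
  have key : E p (j + 1) c - (p : ℂ)⁻¹ • E p j a =
      ∑ k ∈ Finset.Ico 1 p, ((p : ℂ)⁻¹ * S⁻¹ *
        padicChar p ((k : ℚ_[p]) / (p : ℚ_[p]) * (-(p * c - a)))) • kozyrev p k j a := by
    funext x
    simp only [Pi.sub_apply, Pi.smul_apply, Finset.sum_apply, smul_eq_mul, kozyrev, ← hS]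
    unfold E
    set y := (p : ℚ_[p]) ^ (-j) * x - a with hy
    have hE : (p : ℚ_[p]) ^ (-(j + 1)) * x - c = (y - (p * c - a)) / p := by
      rw [hy, neg_add, zpow_add₀ hpp, zpow_neg_one]; field_simp; ring
    rw [hE]
    by_cases hy1 : ‖y‖ ≤ 1
    · have h := char_sum p y (p * c - a) hy1 hac
      rw [Finset.range_eq_Ico, Finset.sum_eq_sum_Ico_succ_bot hp0] at h
      have h00 : padicChar p 0 = 1 := by
        have := char_eq p 0 0 0 (by simp)
        simpa using this
      simp only [Nat.cast_zero, zero_div, zero_mul, h00, zero_add] at h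
      have hi : indZ p y = 1 := by simp [indZ, hy1]
      rw [hi]
      have : indZ p ((y - (p * c - a)) / p) = (p : ℂ)⁻¹ * (p * indZ p ((y - (p * c - a)) / p)) := by
        field_simp
      rw [this, ← h, ← mul_sub, mul_one, add_sub_cancel_left, Finset.mul_sum]
      refine Finset.sum_congr rfl fun k _ => ?_
      field_simp
    · have hi : indZ p y = 0 := by simp [indZ, hy1]
      have hi2 : indZ p ((y - (p * c - a)) / p) = 0 := by
        unfold indZ
        rw [if_neg]
        intro h
        apply hy1
        have hpn : ‖(p : ℚ_[p])‖ ≤ 1 := le1_nat p p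
        have := le1_add p (le1_mul p h hpn) hac
        rwa [div_mul_cancel₀ _ hpp, sub_add_cancel] at this
      simp [hi, hi2]
  rw [key]
  refine Submodule.sum_mem _ fun k hk => Submodule.smul_mem _ _ (Submodule.subset_span ?_)
  rw [Finset.mem_Ico] at hk
  exact ⟨(⟨k, hk.1, by omega⟩, j, ⟨a, ha⟩), rfl⟩

lemma steps (j : ℤ) (N : ℕ) (c : ℚ_[p]) :
    E p (j + N) c - ((p : ℂ)⁻¹ ^ N) • E p j (p ^ N * c) ∈ Submodule.span ℂ (KS p) := by
  induction N generalizing c with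
  | zero => simp
  | succ N ih =>
    have h1 := step p (j + N) c
    have h2 := Submodule.smul_mem _ ((p : ℂ)⁻¹) (ih (p * c))
    have := Submodule.add_mem _ h1 h2
    rw [smul_sub, smul_smul, ← pow_succ', ← mul_assoc, ← pow_succ] at this
    rw [sub_add_sub_cancel] at this
    convert this using 3
    push_cast; ring

lemma local_span (μ : Measure ℚ_[p]) (hμ : μ.IsAddHaarMeasure) (f : ℚ_[p] → ℂ)
    (hf : IsLocallyConstant f) (hc : HasCompactSupport f) (hi : ∫ x, f x ∂μ = 0) :
    f ∈ Submodule.span ℂ (KS p) := by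
  have hpp := p_ne p
  have hp1 : (1 : ℝ) < p := by exact_mod_cast (Fact.out : p.Prime).one_lt
  have hpR : (0 : ℝ) < p := by linarith
  -- bounding radius
  obtain ⟨R, hR⟩ := hc.isBounded.exists_norm_le
  obtain ⟨m, hm⟩ := pow_unbounded_of_one_lt R hp1
  have hout : ∀ x, ¬ ‖(p : ℚ_[p]) ^ m * x‖ ≤ 1 → f x = 0 := by
    intro x hx
    by_contra h0
    apply hx
    have := hR x (subset_tsupport f h0)
    rw [norm_mul, Padic.norm_p_pow, zpow_neg, zpow_natCast, inv_mul_le_one₀ (by positivity)]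
    linarith
  obtain ⟨δ, hδ, hL⟩ := lebesgue_number_lemma_of_metric (c := fun y : ℚ_[p] => {z | f z = f y})
    (isCompact_closedBall (0 : ℚ_[p]) ((p : ℝ) ^ m)) (fun y => hf.isOpen_fiber (f y))
    (fun y _ => Set.mem_iUnion.2 ⟨y, rfl⟩)
  obtain ⟨n, hn⟩ := exists_pow_lt_of_lt_one hδ (inv_lt_one_of_one_lt₀ hp1)
  set N := m + n with hN
  have hconst : ∀ x z : ℚ_[p], ‖(p : ℚ_[p]) ^ m * x‖ ≤ 1 →
      ‖((p : ℚ_[p]) ^ m * x - p ^ m * z) / p ^ N‖ ≤ 1 → f x = f z := by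
    intro x z hx hz
    obtain ⟨i, hi⟩ := hL x (by
      rw [mem_closedBall_zero_iff]
      rwa [norm_mul, Padic.norm_p_pow, zpow_neg, zpow_natCast, inv_mul_le_one₀ (by positivity)] at hx)
    have hzx : z ∈ Metric.ball x δ := by
      rw [mem_ball_iff_norm']
      have e : ((p : ℚ_[p]) ^ m * x - p ^ m * z) / p ^ N = (x - z) / p ^ n := by
        rw [hN, pow_add]; field_simp
      rw [e, norm_div, Padic.norm_p_pow, zpow_neg, zpow_natCast, div_le_one (by positivity)] at hz
      rw [inv_pow] at hn
      linarith
    exact (hi (Metric.mem_ball_self hδ)).trans (hi hzx).symm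
  have hEeq : ∀ (a : ℚ_[p]) x, E p (-(m : ℤ) + N) (a / p ^ N) x =
      indZ p (((p : ℚ_[p]) ^ m * x - a) / p ^ N) := by
    intro a x
    unfold E
    congr 1
    rw [neg_add, neg_neg, zpow_add₀ hpp, zpow_natCast, zpow_neg, zpow_natCast]
    field_simp
  have hdecomp : f = ∑ a ∈ Finset.range (p ^ N),
      f ((a : ℚ_[p]) / p ^ m) • E p (-(m : ℤ) + N) ((a : ℚ_[p]) / p ^ N) := by
    funext x
    simp only [Finset.sum_apply, Pi.smul_apply, smul_eq_mul, hEeq]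
    by_cases hx : ‖(p : ℚ_[p]) ^ m * x‖ ≤ 1
    · obtain ⟨a, ha, h⟩ := exists_approx p _ hx N
      rw [Finset.sum_eq_single_of_mem a (Finset.mem_range.2 ha)]
      · rw [indZ, if_pos h, mul_one]
        apply hconst _ _ hx
        rwa [mul_div_cancel₀ _ (pow_ne_zero m hpp)]
      · intro b hb hba
        rw [indZ, if_neg, mul_zero]
        intro h'
        apply hba
        have h2 := le1_sub p h h'
        have h3 : ‖((b - a : ℤ) : ℚ_[p]) / p ^ N‖ ≤ 1 := by
          convert h2 using 2
          push_cast; ring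
        rw [le1_int_div] at h3
        have h4 : (a : ℤ) ≡ b [ZMOD ((p ^ N : ℕ) : ℤ)] := by
          rw [Int.modEq_iff_dvd]; exact_mod_cast h3
        have h5 := (Int.natCast_modEq_iff.1 h4)
        exact (Nat.ModEq.eq_of_lt_of_lt h5 ha (Finset.mem_range.1 hb)).symm
    · rw [hout x hx]
      symm
      apply Finset.sum_eq_zero
      intro a _
      rw [indZ, if_neg, mul_zero]
      intro h
      apply hx
      have hpn : ‖(p : ℚ_[p]) ^ N‖ ≤ 1 := by
        have := le1_nat p (p ^ N); push_cast at this; exact this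
      have := le1_add p (le1_mul p h hpn) (le1_nat p a)
      rwa [div_mul_cancel₀ _ (pow_ne_zero _ hpp), sub_add_cancel] at this
  -- integral of the balls
  have hball : ∀ a : ℚ_[p], E p (-(m : ℤ) + N) (a / p ^ N) =
      Set.indicator (Metric.closedBall (a / p ^ m) (((p : ℝ) ^ n)⁻¹)) (fun _ => (1 : ℂ)) := by
    intro a
    funext x
    rw [hEeq, indZ, Set.indicator_apply]
    have e : ((p : ℚ_[p]) ^ m * x - a) / p ^ N = (x - a / p ^ m) / p ^ n := by
      rw [hN, pow_add]; field_simp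
    have e' : ‖((p : ℚ_[p]) ^ m * x - a) / p ^ N‖ ≤ 1 ↔
        x ∈ Metric.closedBall (a / p ^ m) (((p : ℝ) ^ n)⁻¹) := by
      rw [e, norm_div, Padic.norm_p_pow, zpow_neg, zpow_natCast, div_le_one (by positivity),
        mem_closedBall_iff_norm]
    simp only [e']
  have hint : ∀ a : ℚ_[p], ∫ x, E p (-(m : ℤ) + N) (a / p ^ N) x ∂μ =
      (μ.real (Metric.closedBall 0 (((p : ℝ) ^ n)⁻¹)) : ℂ) := by
    intro a
    rw [hball, integral_indicator Metric.isClosed_closedBall.measurableSet]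
    simp [Measure.real, Measure.addHaar_closedBall_center]
  have hsum : ∑ a ∈ Finset.range (p ^ N), f ((a : ℚ_[p]) / p ^ m) = 0 := by
    have h1 : ∫ x, f x ∂μ = (∑ a ∈ Finset.range (p ^ N), f ((a : ℚ_[p]) / p ^ m)) *
        (μ.real (Metric.closedBall 0 (((p : ℝ) ^ n)⁻¹)) : ℂ) := by
      conv_lhs => rw [hdecomp]
      simp only [Finset.sum_apply, Pi.smul_apply, smul_eq_mul]
      rw [integral_finsetSum, Finset.sum_mul]
      · refine Finset.sum_congr rfl fun a _ => ?_
        rw [integral_const_mul, hint]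
      · intro a _
        apply Integrable.const_mul
        rw [hball, integrable_indicator_iff Metric.isClosed_closedBall.measurableSet]
        simpa using (isCompact_closedBall _ _).measure_lt_top
    rw [hi] at h1
    refine (mul_eq_zero.1 h1.symm).resolve_right ?_
    rw [Complex.ofReal_eq_zero]
    refine (ENNReal.toReal_pos ?_ ?_).ne'
    · exact (Metric.measure_closedBall_pos μ _ (inv_pos.2 (pow_pos hpR n))).ne'
    · exact (isCompact_closedBall _ _).measure_ne_top
  have hfin : f = ∑ a ∈ Finset.range (p ^ N), f ((a : ℚ_[p]) / p ^ m) •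
      (E p (-(m : ℤ) + N) ((a : ℚ_[p]) / p ^ N) -
        ((p : ℂ)⁻¹ ^ N) • E p (-(m : ℤ)) (p ^ N * ((a : ℚ_[p]) / p ^ N))) := by
    simp_rw [smul_sub]
    rw [Finset.sum_sub_distrib, ← hdecomp, eq_comm, sub_eq_self]
    have : ∀ a : ℕ, E p (-(m : ℤ)) (p ^ N * ((a : ℚ_[p]) / p ^ N)) = E p (-(m : ℤ)) 0 := by
      intro a
      apply E_congr
      rw [mul_div_cancel₀ _ (pow_ne_zero _ hpp), sub_zero]
      exact le1_nat p a
    simp_rw [this]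
    rw [← Finset.sum_smul, hsum, zero_smul]
  rw [hfin]
  exact Submodule.sum_mem _ fun a _ => Submodule.smul_mem _ _ (steps p _ N _)

lemma tprod_split (S : Finset Nat.Primes) (g : ∀ q : Nat.Primes, ℚ_[(q : ℕ)] → ℂ)
    (hg : ∀ q ∉ S, g q = fun x => indZ q x) (x : Adele) :
    ∏' q : Nat.Primes, g q (x.1.2 q) =
      (∏ q ∈ S, g q (x.1.2 q)) *
        ∏' q : Nat.Primes, (if q ∈ S then 1 else indZ q (x.1.2 q)) := by
  have h1 : ∀ q : Nat.Primes, g q (x.1.2 q) =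
      (if q ∈ S then g q (x.1.2 q) else 1) * (if q ∈ S then 1 else indZ q (x.1.2 q)) := by
    intro q
    split_ifs with h
    · simp
    · simp [hg q h]
  rw [tprod_congr h1, Multipliable.tprod_mul]
  · congr 1
    rw [tprod_eq_prod (s := S)]
    · exact Finset.prod_congr rfl fun q hq => by simp [hq]
    · intro q hq; simp [hq]
  · apply multipliable_of_ne_finset_one (s := S)
    intro q hq; simp [hq]
  · apply multipliable_of_hasFiniteMulSupport
    have hx := x.2
    rw [Filter.eventually_cofinite] at hx
    refine Set.Finite.subset hx ?_
    intro q hq hq'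
    apply hq
    simp [indZ, hq']

/-- Elementary pieces of the decomposition. -/
def G : Set (Adele → ℂ) :=
  {F | ∃ (c : SchwartzMap ℝ ℂ) (w : (∀ q : Nat.Primes, ℚ_[(q : ℕ)]) → ℂ),
    (∀ n : ℕ, ∫ t : ℝ, (t : ℂ) ^ n * c t = 0) ∧ w ∈ waveletProdSet ∧
    F = fun x : Adele => c x.1.1 * w x.1.2}

open scoped Pointwise

lemma sprod_mem (S : Finset Nat.Primes) (V : Nat.Primes → Submodule ℂ (Adele → ℂ))
    (f : Nat.Primes → Adele → ℂ) (h : ∀ q ∈ S, f q ∈ V q) :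
    ∏ q ∈ S, f q ∈ ∏ q ∈ S, V q := by
  induction S using Finset.induction_on with
  | empty => simpa using Submodule.one_le.1 (le_refl (1 : Submodule ℂ (Adele → ℂ)))
  | insert a S ha ih =>
    rw [Finset.prod_insert ha, Finset.prod_insert ha]
    exact Submodule.mul_mem_mul (h a (Finset.mem_insert_self _ _))
      (ih fun q hq => h q (Finset.mem_insert_of_mem hq))

lemma elem_mem (μp : ∀ q : Nat.Primes, MeasureTheory.Measure ℚ_[(q : ℕ)])
    (hHaar : ∀ q, (μp q).IsAddHaarMeasure) :
    elementaryAdelicLizorkinSet μp ⊆ Submodule.span ℂ G := by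
  rintro F ⟨ζR, ζ, hR, hlc, hcs, ⟨P, hP1, hP2⟩, rfl⟩
  have hfin : {q : Nat.Primes | (q : ℕ) ≤ P}.Finite := by
    apply Set.Finite.of_finite_image (f := fun q : Nat.Primes => (q : ℕ))
    · exact (Set.finite_Iic (P : ℕ)).subset (by rintro _ ⟨q, hq, rfl⟩; exact hq)
    · exact Subtype.val_injective.injOn
  set S := hfin.toFinset with hS
  have hSmem : ∀ q, q ∈ S ↔ (q : ℕ) ≤ P := by intro q; simp [hS]
  set h : Adele → ℂ := fun x => ζR x.1.1 *
    ∏' q : Nat.Primes, (if q ∈ S then 1 else indZ q (x.1.2 q)) with hh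
  set M : Nat.Primes → Set (Adele → ℂ) := fun q =>
    (fun f : ℚ_[(q : ℕ)] → ℂ => fun x : Adele => f (x.1.2 q)) '' KS q with hM
  have h1 : (fun x : Adele => ζR x.1.1 * ∏' q : Nat.Primes, ζ q (x.1.2 q)) =
      h * ∏ q ∈ S, (fun x : Adele => ζ q (x.1.2 q)) := by
    funext x
    rw [tprod_split S ζ (fun q hq => hP1 q (by rw [hSmem] at hq; omega))]
    simp only [hh, Pi.mul_apply, Finset.prod_apply]
    ring
  have h2 : ∀ q ∈ S, (fun x : Adele => ζ q (x.1.2 q)) ∈ Submodule.span ℂ (M q) := by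
    intro q hq
    have := local_span q (μp q) (hHaar q) (ζ q) (hlc q) (hcs q) (hP2 q ((hSmem q).1 hq))
    have h3 := Submodule.mem_map_of_mem
      (f := LinearMap.funLeft ℂ ℂ (fun x : Adele => x.1.2 q)) this
    rw [Submodule.map_span] at h3
    exact h3
  have h3 : h * ∏ q ∈ S, (fun x : Adele => ζ q (x.1.2 q)) ∈
      Submodule.span ℂ ({h} * ∏ q ∈ S, M q) := by
    rw [← Submodule.span_mul_span, ← Submodule.prod_span]
    exact Submodule.mul_mem_mul (Submodule.mem_span_singleton_self h)
      (sprod_mem S _ _ h2)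
  rw [h1]
  refine Submodule.span_mono ?_ h3
  rintro _ ⟨_, rfl, _, hg, rfl⟩
  obtain ⟨g, hgM, rfl⟩ := (Set.mem_finsetProd _ _ _).1 hg
  choose! f hf hfg using fun q (hq : q ∈ S) => hgM hq
  choose t ht using hf
  refine ⟨ζR, _, hR, ⟨fun q => if hq : q ∈ S then some (t q hq) else none, ?_, rfl⟩, ?_⟩
  · refine S.finite_toSet.subset ?_
    intro q hq
    by_contra hq'
    apply hq
    exact dif_neg (by simpa using hq')
  · funext x
    have := tprod_split S (fun q y => (if hq : q ∈ S then some (t q hq) else none : Option _).elim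
      (indZ q y) (fun t => kozyrev q t.1 t.2.1 t.2.2 y)) (by
        intro q hq; simp [hq]) x
    dsimp only at this ⊢
    rw [this]
    simp only [hh, Pi.mul_apply, Finset.prod_apply]
    rw [mul_assoc, mul_comm (∏' _, _)]
    congr 2
    refine Finset.prod_congr rfl fun q hq => ?_
    rw [← hfg q hq]
    simp [hq, ← ht q hq]

end LizAux

/-- Every finite linear combination `ζ` of elementary adelic Lizorkin
test functions can be written as a finite sum `ζ(x) = Σ_i c_i(x_∞)·W_i(x')`, where each
`c_i` is a Schwartz function with all moments vanishing and each `W_i` is a wavelet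
function on the finite-adele component.  Here `μ_p` is the Haar measure on `ℚ_p` with
`μ_p(ℤ_p) = 1`. -/
theorem adelic_lizorkin_wavelet_decomposition
    (μp : ∀ q : Nat.Primes, MeasureTheory.Measure ℚ_[(q : ℕ)])
    (hHaar : ∀ q, (μp q).IsAddHaarMeasure)
    (hnorm : ∀ q, μp q {x : ℚ_[(q : ℕ)] | ‖x‖ ≤ 1} = 1)
    (ζ : Adele → ℂ) (hζ : ζ ∈ Submodule.span ℂ (elementaryAdelicLizorkinSet μp)) :
    ∃ (N : ℕ) (c : Fin N → SchwartzMap ℝ ℂ)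
      (w : Fin N → (∀ q : Nat.Primes, ℚ_[(q : ℕ)]) → ℂ),
      (∀ i, ∀ n : ℕ, ∫ t : ℝ, (t : ℂ) ^ n * c i t = 0) ∧
      (∀ i, w i ∈ waveletProdSet) ∧
      ζ = fun x : Adele => ∑ i : Fin N, c i x.1.1 * w i x.1.2 := by
  have h1 : ζ ∈ Submodule.span ℂ LizAux.G :=
    Submodule.span_le.2 (LizAux.elem_mem μp hHaar) hζ
  obtain ⟨N, a, g, hg⟩ := Submodule.mem_span_set'.1 h1
  choose c w hc hw hcw using fun i => (g i).2
  refine ⟨N, fun i => a i • c i, w, ?_, hw, ?_⟩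
  · intro i n
    have : ∀ t : ℝ, (t : ℂ) ^ n * (a i • c i) t = a i * ((t : ℂ) ^ n * c i t) := by
      intro t
      rw [_root_.smul_apply, smul_eq_mul]; ring
    simp_rw [this]
    rw [integral_const_mul, hc, mul_zero]
  · rw [← hg]
    funext x
    simp only [Finset.sum_apply, Pi.smul_apply, smul_eq_mul]
    refine Finset.sum_congr rfl fun i _ => ?_
    rw [hcw i, _root_.smul_apply, smul_eq_mul, mul_assoc]
end
end
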